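/- arXiv:0710.2454 — 3 statements merged into one kernel-verified Lean document; each statement's English description precedes it below -/
import Mathlib

section
/- For every integer n ≥ 1 and every finite number of variables, the following identity of symmetric polynomials over ℚ holds: Σ_{(i,j,k)∈ℕ³, i+j+k=n} i²·e_i·e_j·e_k = (1/12) · Σ_{μ ⊢ n} (−1)^{n−ℓ(μ)} · ((ℓ(μ)+2)! / Π_i m_i(μ)!) · (n² + p_2(μ)) · h_μ, where the right-hand sum is over all partitions μ of n. -/
open MvPolynomial Finset

/-!
Let `E(t) = ∑ eᵢ tⁱ` and `g(t) = 1 - H(-t)`, so that `E = 1 / (1 - g)`, and let `D = t d/dt`. The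
left-hand side of the theorem is the coefficient of `tⁿ` in `E² D²E`.

Since `1 / (1 - g)³ = ∑ (l + 1)(l + 2) / 2 · gˡ`, expanding `gˡ` by the multinomial theorem writes
the coefficient of `tⁿ` in `E³` as a sum over the partitions `μ` of `n`. Applying `D²` multiplies
it by `n²`. Deforming `g` to `g + ε D²g` with `ε² = 0` multiplies the summand of `μ` by
`1 + ε p₂(μ)` and turns `E³` into `E³ + 3 ε E⁴ D²g`. The right-hand side is therefore, up to a
constant, the coefficient of `tⁿ` in `D²(E³) + 3 E⁴ D²g`.

Finally `DE = E² Dg` gives `D²E = E² D²g + 2 E³ (Dg)²`, whence `D²(E³) + 3 E⁴ D²g = 6 E² D²E`. The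
exponent `3` is the one for which the terms `E⁵ (Dg)²` match.
-/

open scoped PowerSeries

theorem prod_map_monomial {R : Type*} [CommSemiring R] (c : ℕ → R) (s : Multiset ℕ) :
    (s.map fun i ↦ Polynomial.monomial i (c i)).prod =
      Polynomial.monomial s.sum (s.map c).prod := by
  induction s using Multiset.induction_on with
  | empty => simp
  | cons a s ih => simp [ih, Polynomial.monomial_mul_monomial]

theorem coeff_pow_eq_sum_partition {R : Type*} [CommSemiring R] {f : R⟦X⟧}
    (hf : f.constantCoeff = 0) (n l : ℕ) :
    (f ^ l).coeff n = ∑ μ : n.Partition with μ.parts.card = l,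
      μ.parts.countPerms • (μ.parts.map fun i ↦ f.coeff i).prod := by
  have coeff_term (s : Sym ℕ l) : ((s.1.countPerms : Polynomial R) *
      (s.1.map fun i ↦ Polynomial.monomial i (f.coeff i)).prod).coeff n =
      if s.1.sum = n then s.1.countPerms • (s.1.map fun i ↦ f.coeff i).prod else 0 := by
    simp [prod_map_monomial, Polynomial.coeff_monomial]
  calc (f ^ l).coeff n = ((f.trunc (n + 1)) ^ l).coeff n := by
        rw [← PowerSeries.coeff_coe_trunc_of_lt n.lt_succ_self, ← PowerSeries.trunc_trunc_pow,
          PowerSeries.coeff_coe_trunc_of_lt n.lt_succ_self, ← Polynomial.coe_pow,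
          Polynomial.coeff_coe]
    _ = ∑ s ∈ (range (n + 1)).sym l with s.1.sum = n,
          s.1.countPerms • (s.1.map fun i ↦ f.coeff i).prod := by
        simp only [PowerSeries.trunc_apply, Nat.Ico_zero_eq_range, Finset.sum_pow,
          Polynomial.finsetSum_coeff, coeff_term, sum_filter]
    _ = _ := by
        symm
        refine sum_bij_ne_zero (fun μ hμ _ ↦ ⟨μ.parts, (mem_filter.1 hμ).2⟩) ?_ ?_ ?_ ?_
        · intro μ hμ _
          refine mem_filter.2 ⟨mem_sym_iff.2 fun i hi ↦ ?_, μ.parts_sum⟩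
          exact mem_range_succ_iff.2 (Nat.Partition.le_of_mem_parts hi)
        · intro μ _ _ ν _ _ h
          exact Nat.Partition.ext (congrArg Subtype.val h)
        · intro s hs hne
          have zero_notMem : 0 ∉ s.1 := fun h0 ↦ hne <| by
            rw [Multiset.prod_eq_zero (Multiset.mem_map.2 ⟨0, h0, by simpa using hf⟩), smul_zero]
          exact ⟨⟨s.1, fun hi ↦ Nat.pos_of_ne_zero (ne_of_mem_of_not_mem hi zero_notMem),
            (mem_filter.1 hs).2⟩, mem_filter.2 ⟨mem_univ _, s.2⟩, hne, rfl⟩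
        · intro μ _ _
          rfl

theorem coeff_subst_eq_sum_partition {R S : Type*} [CommRing R] [CommRing S] [Algebra R S]
    (f : R⟦X⟧) {g : S⟦X⟧} (hg : g.constantCoeff = 0) (n : ℕ) :
    PowerSeries.coeff n (f.subst g) = ∑ μ : n.Partition, f.coeff μ.parts.card •
      (μ.parts.countPerms • (μ.parts.map fun i ↦ g.coeff i).prod) := by
  have coeff_term (l : ℕ) : f.coeff l • (g ^ l).coeff n =
      ∑ μ : n.Partition with μ.parts.card = l, f.coeff μ.parts.card •
        (μ.parts.countPerms • (μ.parts.map fun i ↦ g.coeff i).prod) := by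
    rw [coeff_pow_eq_sum_partition hg, smul_sum]
    exact sum_congr rfl fun μ hμ ↦ by rw [(mem_filter.1 hμ).2]
  simp only [PowerSeries.coeff_subst' (.of_constantCoeff_zero' hg), coeff_term]
  rw [finsum_eq_sum_of_support_subset (s := univ.image fun μ : n.Partition ↦ μ.parts.card)]
  · exact sum_fiberwise_of_maps_to (fun μ _ ↦ mem_image_of_mem _ (mem_univ μ)) _
  · intro l hl
    obtain ⟨μ, hμ, -⟩ := exists_ne_zero_of_sum_ne_zero hl
    exact mem_coe.2 (mem_image.2 ⟨μ, mem_univ μ, (mem_filter.1 hμ).2⟩)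

theorem coeff_pow_succ_eq_sum_partition {R : Type*} [CommRing R] {u g : R⟦X⟧}
    (hg : g.constantCoeff = 0) (hu : u * (1 - g) = 1) (d n : ℕ) :
    (u ^ (d + 1)).coeff n = ∑ μ : n.Partition,
      ((d + μ.parts.card).choose d * μ.parts.countPerms) •
        (μ.parts.map fun i ↦ g.coeff i).prod := by
  have hsubst : PowerSeries.HasSubst g := .of_constantCoeff_zero' hg
  set b : R⟦X⟧ := PowerSeries.mk fun l ↦ ((d + l).choose d : R) with hb
  have subst_mul : b.subst g * (1 - g) ^ (d + 1) = 1 := by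
    have binomial_series := congrArg (PowerSeries.substAlgHom hsubst)
      (PowerSeries.mk_add_choose_mul_one_sub_pow_eq_one R d)
    rwa [map_mul, map_pow, map_sub, map_one, PowerSeries.substAlgHom_X,
      PowerSeries.coe_substAlgHom] at binomial_series
  have pow_eq_subst : u ^ (d + 1) = b.subst g := by
    have pow_mul_pow : u ^ (d + 1) * (1 - g) ^ (d + 1) = 1 := by rw [← mul_pow, hu, one_pow]
    exact (left_inv_eq_right_inv subst_mul (by rwa [mul_comm])).symm
  rw [pow_eq_subst, coeff_subst_eq_sum_partition _ hg]
  refine sum_congr rfl fun μ _ ↦ ?_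
  rw [hb, PowerSeries.coeff_mk, Nat.cast_smul_eq_nsmul, mul_smul]

section DualNumber

open DualNumber TrivSqZeroExt

variable {R : Type*}

theorem prod_map_inl_add_smul_eps [CommSemiring R] (s : Multiset ℕ) (c w : ℕ → R) :
    (s.map fun i ↦ (inl (c i) + (w i * c i) • ε : R[ε])).prod =
      inl (s.map c).prod + ((s.map w).sum * (s.map c).prod) • ε := by
  induction s using Multiset.induction_on with
  | empty => simp
  | cons i s ih =>
    rw [Multiset.map_cons, Multiset.prod_cons, ih]
    ext
    · simp
    · simp only [DualNumber.snd_mul, snd_add, fst_add, fst_inl, snd_inl, fst_smul, snd_smul,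
        fst_eps, snd_eps, Multiset.map_cons, Multiset.sum_cons, Multiset.prod_cons, smul_eq_mul,
        mul_zero, add_zero, zero_add, mul_one]
      ring

/-- The power series `f + ε f'` over the dual numbers, a deformation of `f` to first order. -/
noncomputable def dualSeries [Semiring R] (f f' : R⟦X⟧) : (R[ε])⟦X⟧ :=
  PowerSeries.mk fun n ↦ inl (f.coeff n) + f'.coeff n • ε

theorem snd_coeff_dualSeries [Semiring R] (f f' : R⟦X⟧) (n : ℕ) :
    ((dualSeries f f').coeff n).snd = f'.coeff n := by
  simp [dualSeries]

theorem dualSeries_mul [CommSemiring R] (f f' g g' : R⟦X⟧) :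
    dualSeries f f' * dualSeries g g' = dualSeries (f * g) (f * g' + f' * g) := by
  ext n
  · simp [dualSeries, PowerSeries.coeff_mul, fst_sum]
  · simp [dualSeries, PowerSeries.coeff_mul, snd_sum, sum_add_distrib, mul_comm]

theorem dualSeries_one_zero [Semiring R] : dualSeries (1 : R⟦X⟧) 0 = 1 := by
  ext n <;> by_cases hn : n = 0 <;> simp [dualSeries, PowerSeries.coeff_one, hn]

theorem dualSeries_sub [Ring R] (f f' g g' : R⟦X⟧) :
    dualSeries f f' - dualSeries g g' = dualSeries (f - g) (f' - g') := by
  ext n <;> simp [dualSeries]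

theorem dualSeries_pow_succ [CommSemiring R] (f f' : R⟦X⟧) (k : ℕ) :
    dualSeries f f' ^ (k + 1) = dualSeries (f ^ (k + 1)) ((k + 1) • (f ^ k * f')) := by
  induction k with
  | zero => simp
  | succ k ih =>
    rw [pow_succ, ih, dualSeries_mul]
    congr 1
    simp only [nsmul_eq_mul]
    push_cast
    ring

theorem succ_nsmul_coeff_pow_mul_eq_sum_partition [CommRing R] {u g : R⟦X⟧}
    (hg : g.constantCoeff = 0) (hu : u * (1 - g) = 1) (w : ℕ → R) (d n : ℕ) :
    (d + 1) • (u ^ (d + 2) * PowerSeries.mk fun i ↦ w i * g.coeff i).coeff n =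
      ∑ μ : n.Partition, ((d + μ.parts.card).choose d * μ.parts.countPerms) •
        ((μ.parts.map w).sum * (μ.parts.map fun i ↦ g.coeff i).prod) := by
  set W : R⟦X⟧ := PowerSeries.mk fun i ↦ w i * g.coeff i with hW
  have hg' : (dualSeries g W).constantCoeff = 0 := by
    simp [dualSeries, hW, hg]
  have hu' : dualSeries u (u ^ 2 * W) * (1 - dualSeries g W) = 1 := by
    rw [← dualSeries_one_zero, dualSeries_sub, dualSeries_mul, hu]
    congr 1
    linear_combination u * W * hu
  have snd_pow : snd ((dualSeries u (u ^ 2 * W) ^ (d + 1)).coeff n) =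
      (d + 1) • (u ^ (d + 2) * W).coeff n := by
    rw [dualSeries_pow_succ, snd_coeff_dualSeries, map_nsmul, pow_add, mul_assoc]
  have coeff_W (i : ℕ) : (dualSeries g W).coeff i = inl (g.coeff i) + (w i * g.coeff i) • ε := by
    rw [dualSeries, hW, PowerSeries.coeff_mk, PowerSeries.coeff_mk]
  rw [← snd_pow, coeff_pow_succ_eq_sum_partition hg' hu', snd_sum]
  refine sum_congr rfl fun μ _ ↦ ?_
  simp only [coeff_W, prod_map_inl_add_smul_eps, snd_smul, snd_add, snd_inl, snd_eps, zero_add,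
    smul_eq_mul, mul_one]

end DualNumber

section Euler

/-- The Euler operator `t d/dt` on power series in `t`, which weights `tⁿ` by `n`. -/
noncomputable def eulerD (R : Type*) [CommSemiring R] : Derivation R R⟦X⟧ R⟦X⟧ :=
  (PowerSeries.X : R⟦X⟧) • PowerSeries.derivative R

variable {R : Type*}

theorem coeff_eulerD [CommSemiring R] (f : R⟦X⟧) (n : ℕ) :
    (eulerD R f).coeff n = n * f.coeff n := by
  cases n with
  | zero => simp [eulerD]
  | succ n => simp [eulerD, PowerSeries.coeff_succ_X_mul, PowerSeries.coeff_derivative, mul_comm]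

theorem eulerD_eulerD_cube_add [CommRing R] {u g : R⟦X⟧} (hu : u * (1 - g) = 1) :
    eulerD R (eulerD R (u ^ 3)) + 3 • (u ^ 4 * eulerD R (eulerD R g)) =
      6 • (u ^ 2 * eulerD R (eulerD R u)) := by
  have eulerD_u : eulerD R u = u ^ 2 * eulerD R g := by
    have eulerD_hu := congrArg (eulerD R) hu
    simp only [Derivation.leibniz, map_sub, Derivation.map_one_eq_zero, smul_eq_mul] at eulerD_hu
    linear_combination u * eulerD_hu - eulerD R u * hu
  have eulerD_cube : eulerD R (u ^ 3) = 3 • (u ^ 4 * eulerD R g) := by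
    rw [Derivation.leibniz_pow, eulerD_u, smul_eq_mul]
    ring
  rw [eulerD_cube, map_nsmul]
  simp only [eulerD_u, Derivation.leibniz, Derivation.leibniz_pow, smul_eq_mul]
  ring

theorem six_nsmul_coeff_sq_mul_eulerD_eulerD [CommRing R] {u g : R⟦X⟧}
    (hg : g.constantCoeff = 0) (hu : u * (1 - g) = 1) (n : ℕ) :
    6 • (u ^ 2 * eulerD R (eulerD R u)).coeff n =
      ∑ μ : n.Partition, ((2 + μ.parts.card).choose 2 * μ.parts.countPerms *
        (n ^ 2 + (μ.parts.map (· ^ 2)).sum)) • (μ.parts.map fun i ↦ g.coeff i).prod := by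
  have eulerD_eulerD_g : eulerD R (eulerD R g) =
      PowerSeries.mk fun i ↦ ((i ^ 2 : ℕ) : R) * g.coeff i := by
    ext i
    rw [coeff_eulerD, coeff_eulerD, PowerSeries.coeff_mk, Nat.cast_pow, sq, mul_assoc]
  have coeff_eulerD_cube : (eulerD R (eulerD R (u ^ 3))).coeff n = ∑ μ : n.Partition,
      ((2 + μ.parts.card).choose 2 * μ.parts.countPerms) •
        (n ^ 2 • (μ.parts.map fun i ↦ g.coeff i).prod) := by
    simp only [coeff_eulerD, coeff_pow_succ_eq_sum_partition hg hu 2 n, smul_comm _ (n ^ 2),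
      ← smul_sum]
    rw [nsmul_eq_mul, Nat.cast_pow, sq, mul_assoc]
  have coeff_eulerD_g : 3 • (u ^ 4 * eulerD R (eulerD R g)).coeff n = ∑ μ : n.Partition,
      ((2 + μ.parts.card).choose 2 * μ.parts.countPerms) •
        ((μ.parts.map (· ^ 2)).sum • (μ.parts.map fun i ↦ g.coeff i).prod) := by
    rw [eulerD_eulerD_g, succ_nsmul_coeff_pow_mul_eq_sum_partition hg hu _ 2 n]
    simp only [nsmul_eq_mul _ (Multiset.prod _), Nat.cast_multiset_sum, Multiset.map_map,
      Function.comp_def]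
  rw [← map_nsmul, ← eulerD_eulerD_cube_add hu, map_add, map_nsmul, coeff_eulerD_cube,
    coeff_eulerD_g, ← sum_add_distrib]
  simp only [mul_add, add_smul, mul_smul]

theorem coeff_prod_fin_eq_sum_antidiagonalTuple [CommSemiring R] {k : ℕ}
    (f : Fin k → R⟦X⟧) (n : ℕ) :
    (∏ j, f j).coeff n =
      ∑ v ∈ Finset.Nat.antidiagonalTuple k n, ∏ j, (f j).coeff (v j) := by
  rw [PowerSeries.coeff_prod]
  refine sum_equiv Finsupp.equivFunOnFinite (fun l ↦ ?_) fun l _ ↦ ?_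
  · simp [Finset.Nat.mem_antidiagonalTuple, mem_finsuppAntidiag]
  · simp

theorem sum_sq_nsmul_coeff_triple [CommSemiring R] (f : R⟦X⟧) (n : ℕ) :
    ∑ v ∈ Finset.Nat.antidiagonalTuple 3 n,
        (v 0 ^ 2) • (f.coeff (v 0) * f.coeff (v 1) * f.coeff (v 2)) =
      (f ^ 2 * eulerD R (eulerD R f)).coeff n := by
  have eq_prod : f ^ 2 * eulerD R (eulerD R f) = ∏ j, ![eulerD R (eulerD R f), f, f] j := by
    simp only [Fin.prod_univ_three, Matrix.cons_val]
    ring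
  rw [eq_prod, coeff_prod_fin_eq_sum_antidiagonalTuple]
  refine sum_congr rfl fun v _ ↦ ?_
  simp only [Fin.prod_univ_three, Matrix.cons_val, coeff_eulerD, nsmul_eq_mul]
  push_cast
  ring

end Euler

section Symmetric

theorem one_add_C_mul_X_mul_rescale_mk_pow_eq_one {R : Type*} [CommRing R] (x : R) :
    (1 + PowerSeries.C x * PowerSeries.X) *
      PowerSeries.rescale (-1) (PowerSeries.mk fun k ↦ x ^ k) = 1 := by
  have geometric :=
    congrArg (PowerSeries.rescale (-x)) (PowerSeries.mk_one_mul_one_sub_eq_one R)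
  simpa [PowerSeries.rescale_mk, PowerSeries.rescale_X, ← mul_pow, mul_comm] using geometric

variable (σ R : Type*) [Fintype σ]

theorem mk_esymm [CommSemiring R] :
    PowerSeries.mk (esymm σ R) = ∏ i, (1 + PowerSeries.C (X i) * PowerSeries.X) := by
  ext1 n
  simp only [prod_one_add, prod_mul_distrib, prod_const, ← map_prod, map_sum,
    PowerSeries.coeff_C_mul, PowerSeries.coeff_X_pow, mul_ite, mul_one, mul_zero]
  rw [PowerSeries.coeff_mk, esymm, powersetCard_eq_filter, sum_filter]
  simp only [eq_comm]

variable [DecidableEq σ]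

theorem mk_hsymm [CommSemiring R] :
    PowerSeries.mk (hsymm σ R) = ∏ i, PowerSeries.mk fun k ↦ X i ^ k := by
  ext1 n
  rw [PowerSeries.coeff_mk, PowerSeries.coeff_prod, hsymm]
  have sum_count (s : Sym σ n) : ∑ i, s.1.count i = n :=
    (Multiset.sum_count_eq_card fun i _ ↦ mem_univ i).trans s.2
  refine sum_bij' (fun s _ ↦ Multiset.toFinsupp s.1)
    (fun l hl ↦ ⟨Finsupp.toMultiset l, ?_⟩) (fun s _ ↦ ?_) (fun l _ ↦ mem_univ _)
    (fun s _ ↦ ?_) (fun l _ ↦ ?_) (fun s _ ↦ ?_)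
  · rw [Finsupp.card_toMultiset, Finsupp.sum_fintype _ _ fun _ ↦ rfl]
    exact (mem_finsuppAntidiag.1 hl).1
  · exact mem_finsuppAntidiag.2 ⟨sum_count s, subset_univ _⟩
  · exact Subtype.ext (Multiset.toFinsupp_toMultiset s.1)
  · simp
  · simp only [PowerSeries.coeff_mk, Multiset.toFinsupp_apply]
    rw [prod_multiset_map_count]
    exact prod_subset (subset_univ _) fun i _ hi ↦ by
      rw [Multiset.count_eq_zero_of_notMem (mt Multiset.mem_toFinset.2 hi), pow_zero]

theorem mk_esymm_mul_rescale_mk_hsymm_eq_one [CommRing R] :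
    PowerSeries.mk (esymm σ R) * PowerSeries.rescale (-1) (PowerSeries.mk (hsymm σ R)) = 1 := by
  rw [mk_esymm, mk_hsymm, map_prod, ← prod_mul_distrib]
  exact prod_eq_one fun i _ ↦ one_add_C_mul_X_mul_rescale_mk_pow_eq_one (X i)

end Symmetric

theorem card_parts_le {n : ℕ} (μ : n.Partition) : μ.parts.card ≤ n := by
  simpa [μ.parts_sum] using Multiset.card_nsmul_le_sum (a := 1) fun i hi ↦ μ.parts_pos hi

theorem prod_map_neg_neg_one_pow_mul {R : Type*} [CommRing R] (c : ℕ → R) (s : Multiset ℕ) :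
    (s.map fun i ↦ -((-1) ^ i * c i)).prod = (-1) ^ (s.sum + s.card) * (s.map c).prod := by
  induction s using Multiset.induction_on with
  | empty => simp
  | cons i s ih =>
    simp only [Multiset.map_cons, Multiset.prod_cons, Multiset.sum_cons, Multiset.card_cons, ih]
    ring

theorem prod_map_coeff_one_sub_rescale {R : Type*} [CommRing R] (c : ℕ → R) {n : ℕ}
    (μ : n.Partition) :
    (μ.parts.map fun i ↦ (1 - PowerSeries.rescale (-1) (PowerSeries.mk c)).coeff i).prod =
      (-1) ^ (n - μ.parts.card) * (μ.parts.map c).prod := by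
  have coeff_part (i : ℕ) (hi : i ∈ μ.parts) :
      (1 - PowerSeries.rescale (-1) (PowerSeries.mk c)).coeff i = -((-1) ^ i * c i) := by
    simp [PowerSeries.coeff_one, PowerSeries.coeff_rescale, (μ.parts_pos hi).ne']
  have parity : Even (n + μ.parts.card) ↔ Even (n - μ.parts.card) := by
    rw [Nat.even_add, Nat.even_sub (card_parts_le μ)]
  rw [Multiset.map_congr rfl coeff_part, prod_map_neg_neg_one_pow_mul, μ.parts_sum,
    neg_one_pow_congr parity]

theorem factorial_card_add_eq {α : Type*} [DecidableEq α] (s : Multiset α) (d : ℕ) :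
    (s.card + d).factorial = d.factorial * ((d + s.card).choose d * s.countPerms) *
      ∏ i ∈ s.toFinset, (s.count i).factorial := by
  have card_factorial :
      (∏ i ∈ s.toFinset, (s.count i).factorial) * s.countPerms = s.card.factorial := by
    rw [← Multiset.toFinset_sum_count_eq s]
    exact Nat.multinomial_spec s.toFinset fun i ↦ s.count i
  rw [add_comm, ← Nat.add_choose_mul_factorial_mul_factorial, ← Nat.choose_symm_add,
    ← card_factorial]
  ring

theorem factorial_card_add_div_prod {K : Type*} [Field K] [CharZero K] {α : Type*}
    [DecidableEq α] (s : Multiset α) (d : ℕ) :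
    ((s.card + d).factorial : K) / ∏ i ∈ s.toFinset, ((s.count i).factorial : K) =
      d.factorial * ((d + s.card).choose d * s.countPerms) := by
  have prod_ne_zero : ∏ i ∈ s.toFinset, ((s.count i).factorial : K) ≠ 0 :=
    prod_ne_zero_iff.2 fun i _ ↦ Nat.cast_ne_zero.2 (Nat.factorial_ne_zero _)
  rw [div_eq_iff prod_ne_zero, factorial_card_add_eq]
  push_cast
  rfl

theorem six_nsmul_sum_sq_esymm_triple (σ R : Type*) [CommRing R] [Fintype σ] [DecidableEq σ]
    (n : ℕ) :
    6 • ∑ v ∈ Finset.Nat.antidiagonalTuple 3 n,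
        (v 0 ^ 2) • (esymm σ R (v 0) * esymm σ R (v 1) * esymm σ R (v 2)) =
      ∑ μ : n.Partition, ((2 + μ.parts.card).choose 2 * μ.parts.countPerms *
        (n ^ 2 + (μ.parts.map (· ^ 2)).sum)) •
          ((-1) ^ (n - μ.parts.card) * hsymmPart σ R μ) := by
  set g := 1 - PowerSeries.rescale (-1) (PowerSeries.mk (hsymm σ R)) with hg
  have g_zero : g.constantCoeff = 0 := by
    simp [hg, ← PowerSeries.coeff_zero_eq_constantCoeff, PowerSeries.coeff_rescale]
  have esymm_mul : PowerSeries.mk (esymm σ R) * (1 - g) = 1 := by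
    rw [sub_sub_cancel, mk_esymm_mul_rescale_mk_hsymm_eq_one]
  have lhs := sum_sq_nsmul_coeff_triple (PowerSeries.mk (esymm σ R)) n
  simp only [PowerSeries.coeff_mk] at lhs
  rw [lhs, six_nsmul_coeff_sq_mul_eulerD_eulerD g_zero esymm_mul]
  simp only [hg, prod_map_coeff_one_sub_rescale, hsymmPart]

theorem sum_sq_esymm_triple_eq_sum_hsymm_general (n : ℕ) (σ : Type*) [Fintype σ]
    [DecidableEq σ] (R : Type*) [CommRing R] [Algebra ℚ R] :
    ∑ v ∈ Finset.Nat.antidiagonalTuple 3 n,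
        ((v 0 : ℚ) ^ 2) • (esymm σ R (v 0) * esymm σ R (v 1) * esymm σ R (v 2)) =
    (1 / 12 : ℚ) • ∑ μ : n.Partition,
      ((-1 : ℚ) ^ (n - μ.parts.card) *
        (((μ.parts.card + 2).factorial : ℚ) /
          ∏ i ∈ μ.parts.toFinset, ((μ.parts.count i).factorial : ℚ)) *
        ((n : ℚ) ^ 2 + ((μ.parts.map (· ^ 2)).sum : ℕ))) •
        hsymmPart σ R μ := by
  have coeff_smul (μ : n.Partition) :
      ((-1 : ℚ) ^ (n - μ.parts.card) * (((μ.parts.card + 2).factorial : ℚ) /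
          ∏ i ∈ μ.parts.toFinset, ((μ.parts.count i).factorial : ℚ)) *
        ((n : ℚ) ^ 2 + ((μ.parts.map (· ^ 2)).sum : ℕ))) • hsymmPart σ R μ =
      (2 : ℚ) • (((2 + μ.parts.card).choose 2 * μ.parts.countPerms *
        (n ^ 2 + (μ.parts.map (· ^ 2)).sum)) •
          ((-1) ^ (n - μ.parts.card) * hsymmPart σ R μ)) := by
    have sign_smul : (-1) ^ (n - μ.parts.card) * hsymmPart σ R μ =
        (-1 : ℚ) ^ (n - μ.parts.card) • hsymmPart σ R μ := by
      rw [Algebra.smul_def, map_pow, map_neg, map_one]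
    rw [factorial_card_add_div_prod, sign_smul, ← Nat.cast_smul_eq_nsmul ℚ, smul_smul, smul_smul]
    congr 1
    push_cast
    ring
  simp only [coeff_smul]
  rw [← smul_sum, ← six_nsmul_sum_sq_esymm_triple]
  simp only [← Nat.cast_smul_eq_nsmul ℚ, ← mul_smul]
  norm_num

/-- **Lemma 2, second identity.** For `n ≥ 1`, in any finite number of variables,
`∑_{i+j+k=n} i² e_i e_j e_k
  = (1/12) ∑_{μ ⊢ n} (-1)^{n-ℓ(μ)} ((ℓ(μ)+2)! / ∏_i m_i(μ)!) (n² + p_2(μ)) h_μ` over `ℚ`. -/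
theorem sum_sq_esymm_triple_eq_sum_hsymm (n : ℕ) (hn : 1 ≤ n)
    (σ : Type*) [Fintype σ] [DecidableEq σ] :
    ∑ v ∈ Finset.Nat.antidiagonalTuple 3 n,
        ((v 0 : ℚ) ^ 2) • (esymm σ ℚ (v 0) * esymm σ ℚ (v 1) * esymm σ ℚ (v 2)) =
    (1 / 12 : ℚ) • ∑ μ : n.Partition,
      ((-1 : ℚ) ^ (n - μ.parts.card) *
        (((μ.parts.card + 2).factorial : ℚ) /
          ∏ i ∈ μ.parts.toFinset, ((μ.parts.count i).factorial : ℚ)) *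
        ((n : ℚ) ^ 2 + ((μ.parts.map (· ^ 2)).sum : ℕ))) •
        hsymmPart σ ℚ μ :=
  sum_sq_esymm_triple_eq_sum_hsymm_general n σ ℚ
end

section
/- Define F_2(ν) = (1/2880)(4·p_2(ν)·p_1(ν)² − p_1(ν)⁴ + 24·p_2(ν)·p_1(ν) − 4·p_1(ν)³ + 30·p_2(ν) + 5·p_1(ν)² + 18·p_1(ν)) for ν ∈ ℕ³, and g_2(μ) = (1/8640)(8·p_2(μ)·p_1(μ)² + p_1(μ)⁴ + 48·p_2(μ)·p_1(μ) + 12·p_1(μ)³ + 60·p_2(μ) + 45·p_1(μ)² + 54·p_1(μ)) for a partition μ. Then for every integer n ≥ 1 and every finite number of variables, the following identity of symmetric polynomials over ℚ holds: Σ_{ν∈ℕ³, ν_1+ν_2+ν_3=n} F_2(ν) · e_{ν_1}·e_{ν_2}·e_{ν_3} = Σ_{μ ⊢ n} (−1)^{n−ℓ(μ)} · g_2(μ) · 3^{ℓ(μ)} · z_μ^{−1} · p_μ. -/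
/-!
Let `D = t d/dt` and `E = ∑ eₙ tⁿ`. Newton's identities say that `D E = L E` with
`L = ∑_{k ≥ 1} (-1)^(k+1) p_k t^k`. Put `w(μ) = (-1)^(|μ| - ℓ(μ)) r^ℓ(μ) z_μ⁻¹ p_μ` and
`H = ∑_μ w(μ) t^|μ|`. Since `z_μ = i mᵢ(μ) z_{μ ∖ i}`, marking a part `i` of `μ`, with weight
`i` or `i²`, and removing it gives `D H = r L H` and `∑_μ p₂(μ) w(μ) t^|μ| = r (D L) H`. The first
equation forces `H = E^r`.

On the other side, `∑_ν p₂(ν) e_ν t^|ν| = r (D² E) E^(r-1) = r (D L + L²) E^r`, whereas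
`D² E^r = (r D L + r² L²) E^r`. Eliminating `L²` shows that the sum of `p₂(ν) e_ν` over `|ν| = n`
is the sum of `(n² + (r - 1) p₂(μ)) / r * w(μ)` over `|μ| = n`. For fixed `p₁ = n` the function
`F₂` is affine in `p₂`, and for `r = 3` the substitution `p₂ ↦ (p₁² + 2 p₂) / 3` turns `F₂` into
`g₂`.
-/

open MvPolynomial Finset

/-- The weight function `F₂`, as a function of the first two power sums of its argument. -/
def F2val (p1 p2 : ℚ) : ℚ :=
  (1 / 2880) * (4 * p2 * p1 ^ 2 - p1 ^ 4 + 24 * p2 * p1 - 4 * p1 ^ 3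
    + 30 * p2 + 5 * p1 ^ 2 + 18 * p1)

/-- The weight function `g₂`, as a function of the first two power sums of its argument. -/
def g2val (p1 p2 : ℚ) : ℚ :=
  (1 / 8640) * (8 * p2 * p1 ^ 2 + p1 ^ 4 + 48 * p2 * p1 + 12 * p1 ^ 3
    + 60 * p2 + 45 * p1 ^ 2 + 54 * p1)

open scoped PowerSeries

section EulerOperator

variable {R : Type*} [CommRing R]

/-- The Euler operator `t d/dt` on power series. -/
noncomputable def eulerOperator (R : Type*) [CommRing R] : Derivation R R⟦X⟧ R⟦X⟧ :=
  (PowerSeries.X : R⟦X⟧) • PowerSeries.derivative R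

theorem coeff_eulerOperator (f : R⟦X⟧) (n : ℕ) :
    (eulerOperator R f).coeff n = n * f.coeff n := by
  cases n with
  | zero => simp [eulerOperator]
  | succ n =>
    simp [eulerOperator, PowerSeries.coeff_succ_X_mul, PowerSeries.coeff_derivative, mul_comm]

theorem eq_of_eulerOperator_eq_mul [IsAddTorsionFree R] {A f g : R⟦X⟧}
    (hA : A.constantCoeff = 0) (hf : eulerOperator R f = A * f) (hg : eulerOperator R g = A * g)
    (h0 : f.constantCoeff = g.constantCoeff) : f = g := by
  ext n
  induction n using Nat.strong_induction_on with
  | _ n ih =>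
    rcases eq_or_ne n 0 with rfl | hn
    · simpa using h0
    have hmul : n • f.coeff n = n • g.coeff n := by
      rw [nsmul_eq_mul, nsmul_eq_mul, ← coeff_eulerOperator, ← coeff_eulerOperator, hf, hg,
        PowerSeries.coeff_mul, PowerSeries.coeff_mul]
      refine sum_congr rfl fun x hx => ?_
      rw [HasAntidiagonal.mem_antidiagonal] at hx
      rcases eq_or_ne x.1 0 with hx0 | hx0
      · simp [hx0, hA]
      · rw [ih x.2 (by omega)]
    exact nsmul_right_injective hn hmul

theorem eulerOperator_pow_of_eq_mul {L E : R⟦X⟧} (hE : eulerOperator R E = L * E) (r : ℕ) :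
    eulerOperator R (E ^ r) = r • L * E ^ r := by
  cases r with
  | zero => simp
  | succ r =>
    rw [Derivation.leibniz_pow, hE, Nat.add_sub_cancel]
    simp only [smul_eq_mul, nsmul_eq_mul]
    ring

/-- Both sides are `r² (D L + L²) E ^ r`. -/
theorem nsmul_pow_mul_eulerOperator_sq {L E : R⟦X⟧} (hE : eulerOperator R E = L * E) (r : ℕ) :
    r • r • (eulerOperator R (eulerOperator R E) * E ^ (r - 1)) =
      eulerOperator R (eulerOperator R (E ^ r)) +
        (r • (eulerOperator R (r • L) * E ^ r) - eulerOperator R (r • L) * E ^ r) := by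
  have hpow := eulerOperator_pow_of_eq_mul hE r
  cases r with
  | zero => simp
  | succ r =>
    rw [hpow, Derivation.leibniz, hpow, hE, Derivation.leibniz, hE, map_nsmul]
    simp only [smul_eq_mul, nsmul_eq_mul, Nat.add_sub_cancel]
    ring

end EulerOperator

section Tuples

variable {R : Type*} [CommSemiring R]

theorem coeff_prod_univ_fin {r : ℕ} (f : Fin r → R⟦X⟧) (n : ℕ) :
    (∏ i, f i).coeff n =
      ∑ v ∈ Finset.Nat.antidiagonalTuple r n, ∏ i, (f i).coeff (v i) := by
  rw [PowerSeries.coeff_prod]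
  refine sum_bij' (fun l _ => ⇑l) (fun v _ => Finsupp.equivFunOnFinite.symm v) ?_ ?_ ?_ ?_ ?_ <;>
    simp +contextual [Finset.Nat.mem_antidiagonalTuple]

theorem sum_prod_coeff_eq_coeff_pow (E : R⟦X⟧) (r n : ℕ) :
    ∑ v ∈ Finset.Nat.antidiagonalTuple r n, ∏ i, E.coeff (v i) = (E ^ r).coeff n := by
  simpa using (coeff_prod_univ_fin (fun _ : Fin r => E) n).symm

theorem sum_stat_mul_prod_coeff (E : R⟦X⟧) (c : ℕ → R) (r n : ℕ) :
    ∑ v ∈ Finset.Nat.antidiagonalTuple r n, (∑ i, c (v i)) * ∏ i, E.coeff (v i) =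
      (r • (PowerSeries.mk (fun k => c k * E.coeff k) * E ^ (r - 1))).coeff n := by
  set F : R⟦X⟧ := PowerSeries.mk fun k => c k * E.coeff k with hF
  have hmark (i : Fin r) :
      ∑ v ∈ Finset.Nat.antidiagonalTuple r n, c (v i) * ∏ j, E.coeff (v j) =
        (F * E ^ (r - 1)).coeff n := by
    have hprod : ∏ j, Function.update (fun _ => E) i F j = F * E ^ (r - 1) := by
      simp [prod_update_of_mem, card_sdiff]
    rw [← hprod, coeff_prod_univ_fin]
    refine sum_congr rfl fun v _ => ?_
    rw [← mul_prod_erase univ _ (mem_univ i), ← mul_prod_erase univ _ (mem_univ i),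
      Function.update_self, hF, PowerSeries.coeff_mk, mul_assoc]
    congr 2
    refine prod_congr rfl fun j hj => ?_
    rw [Function.update_of_ne (ne_of_mem_erase hj)]
  simp_rw [sum_mul]
  rw [sum_comm, sum_congr rfl fun i _ => hmark i, sum_const, card_fin, map_nsmul]

end Tuples

section Partitions

/-- The constant `z_s = ∏ i ^ mᵢ mᵢ!`, where `mᵢ` is the multiplicity of `i` in `s`. -/
def zConst (s : Multiset ℕ) : ℕ :=
  s.prod * ∏ i ∈ s.toFinset, (s.count i).factorial

theorem zConst_cons (i : ℕ) (s : Multiset ℕ) :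
    zConst (i ::ₘ s) = i * (s.count i + 1) * zConst s := by
  have hfactorial (j : ℕ) : ((i ::ₘ s).count j).factorial =
      (if j = i then s.count i + 1 else 1) * (s.count j).factorial := by
    rcases eq_or_ne j i with rfl | hj
    · simp [Nat.factorial_succ]
    · simp [hj]
  have hinsert : ∏ j ∈ insert i s.toFinset, (s.count j).factorial =
      ∏ j ∈ s.toFinset, (s.count j).factorial :=
    prod_insert_of_eq_one_if_notMem fun hi => by simp_all
  simp only [zConst, Multiset.prod_cons, Multiset.toFinset_cons, hfactorial, prod_mul_distrib,
    hinsert, prod_ite_eq', mem_insert_self, if_true]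
  ring

theorem sum_partition_sum_toFinset_erase {M : Type*} [AddCommMonoid M] (n : ℕ)
    (F : ℕ → Multiset ℕ → M) :
    ∑ μ : n.Partition, ∑ i ∈ μ.parts.toFinset, F i (μ.parts.erase i) =
      ∑ i ∈ Icc 1 n, ∑ μ : (n - i).Partition, F i μ.parts := by
  have hswap : ∑ μ : n.Partition, ∑ i ∈ μ.parts.toFinset, F i (μ.parts.erase i) =
      ∑ i ∈ Icc 1 n, ∑ μ : n.Partition with i ∈ μ.parts, F i (μ.parts.erase i) :=
    sum_comm' fun μ i => by
      simpa using fun hi => ⟨μ.parts_pos hi, μ.le_of_mem_parts hi⟩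
  rw [hswap]
  refine sum_congr rfl fun i hi => ?_
  obtain ⟨hi1, hin⟩ := mem_Icc.1 hi
  rw [sum_subtype (p := fun μ : n.Partition => i ∈ μ.parts) _ (by simp)]
  exact Fintype.sum_equiv (Nat.Partition.partitionWithPartEquiv hi1 hin) _ _ (by simp)

variable {R : Type*} [CommRing R] [Algebra ℚ R]

/-- The weight `z_s⁻¹ ∏_{k ∈ s} A_k` of a multiset `s`, with `A_k` the coefficients of `A`. -/
noncomputable def partitionWeight (A : R⟦X⟧) (s : Multiset ℕ) : R :=
  (zConst s : ℚ)⁻¹ • (s.map fun k => A.coeff k).prod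

/-- The generating series `∑_μ z_μ⁻¹ A_μ t^|μ|` of the weights of all partitions, that is,
`exp (∑_{k ≥ 1} A_k t^k / k)`. -/
noncomputable def partitionSeries (A : R⟦X⟧) : R⟦X⟧ :=
  PowerSeries.mk fun n => ∑ μ : n.Partition, partitionWeight A μ.parts

theorem constantCoeff_partitionSeries (A : R⟦X⟧) : (partitionSeries A).constantCoeff = 1 := by
  rw [← PowerSeries.coeff_zero_eq_constantCoeff_apply, partitionSeries, PowerSeries.coeff_mk]
  simp [partitionWeight, zConst]

theorem count_smul_partitionWeight_of_mem (A : R⟦X⟧) {i : ℕ} {s : Multiset ℕ} (hi : i ∈ s) :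
    (s.count i : ℚ) • partitionWeight A s =
      ((i : ℚ)⁻¹ • A.coeff i) * partitionWeight A (s.erase i) := by
  obtain ⟨t, rfl⟩ := Multiset.exists_cons_of_mem hi
  have hcount : (t.count i + 1 : ℚ) ≠ 0 := by positivity
  rw [Multiset.erase_cons_head, Multiset.count_cons_self]
  simp only [partitionWeight, zConst_cons, Multiset.map_cons, Multiset.prod_cons,
    smul_mul_smul_comm, smul_smul]
  congr 1
  push_cast
  field_simp

/-- Marking one part of a partition and removing it. The series on the right has no constant term,
as `f 0 / 0 = 0`. -/
theorem sum_stat_smul_partitionWeight (A : R⟦X⟧) (f : ℕ → ℚ) (n : ℕ) :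
    ∑ μ : n.Partition, (μ.parts.map f).sum • partitionWeight A μ.parts =
      (PowerSeries.mk (fun k => (f k / k) • A.coeff k) * partitionSeries A).coeff n := by
  have hmark (μ : n.Partition) : (μ.parts.map f).sum • partitionWeight A μ.parts =
      ∑ i ∈ μ.parts.toFinset,
        (f i / i) • A.coeff i * partitionWeight A (μ.parts.erase i) := by
    rw [sum_multiset_map_count, sum_smul]
    refine sum_congr rfl fun i hi => ?_
    rw [nsmul_eq_mul, mul_comm, mul_smul,
      count_smul_partitionWeight_of_mem A (Multiset.mem_toFinset.1 hi), div_eq_mul_inv, mul_smul,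
      smul_mul_assoc (f i)]
  rw [sum_congr rfl fun μ _ => hmark μ, sum_partition_sum_toFinset_erase n
    fun i s => (f i / i) • A.coeff i * partitionWeight A s, PowerSeries.coeff_mul,
    Finset.Nat.sum_antidiagonal_eq_sum_range_succ_mk, sum_range_eq_add_Ico _ n.succ_pos]
  simp [partitionSeries, mul_sum, Ico_add_one_right_eq_Icc]

theorem eulerOperator_partitionSeries {A : R⟦X⟧} (hA : A.constantCoeff = 0) :
    eulerOperator R (partitionSeries A) = A * partitionSeries A := by
  have hmk : PowerSeries.mk (fun k => ((k : ℚ) / k) • A.coeff k) = A := by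
    ext k
    rcases eq_or_ne k 0 with rfl | hk
    · simp [hA]
    · simp [hk]
  ext n
  rw [← congrArg (· * partitionSeries A) hmk, ← sum_stat_smul_partitionWeight,
    coeff_eulerOperator, partitionSeries, PowerSeries.coeff_mk, mul_sum]
  refine sum_congr rfl fun μ _ => ?_
  rw [← Nat.cast_multiset_sum, μ.parts_sum, Nat.cast_smul_eq_nsmul, nsmul_eq_mul]

theorem sum_sq_smul_partitionWeight (A : R⟦X⟧) (n : ℕ) :
    ∑ μ : n.Partition, (μ.parts.map fun k : ℕ => (k : ℚ) ^ 2).sum •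
        partitionWeight A μ.parts =
      (eulerOperator R A * partitionSeries A).coeff n := by
  have hmk : PowerSeries.mk (fun k => ((k : ℚ) ^ 2 / k) • A.coeff k) = eulerOperator R A := by
    ext k
    rw [PowerSeries.coeff_mk, coeff_eulerOperator, sq, mul_self_div_self, Nat.cast_smul_eq_nsmul,
      nsmul_eq_mul]
  rw [sum_stat_smul_partitionWeight, hmk]

end Partitions

section LogarithmicDerivative

variable {R : Type*} [CommRing R] [Algebra ℚ R] {L E : R⟦X⟧}

theorem partitionSeries_nsmul_eq_pow (hE : eulerOperator R E = L * E)
    (hE0 : E.constantCoeff = 1) (r : ℕ) : partitionSeries (r • L) = E ^ r := by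
  have : IsAddTorsionFree R := .of_module_rat R
  have hL0 : L.constantCoeff = 0 := by
    have h := coeff_eulerOperator E 0
    simpa [hE, hE0] using h
  have hrL0 : (r • L).constantCoeff = 0 := by simp [hL0]
  exact eq_of_eulerOperator_eq_mul hrL0 (eulerOperator_partitionSeries hrL0)
    (eulerOperator_pow_of_eq_mul hE r) (by simp [constantCoeff_partitionSeries, hE0])

theorem sum_prod_coeff_eq_sum_partitionWeight (hE : eulerOperator R E = L * E)
    (hE0 : E.constantCoeff = 1) (r n : ℕ) :
    ∑ v ∈ Finset.Nat.antidiagonalTuple r n, ∏ i, E.coeff (v i) =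
      ∑ μ : n.Partition, partitionWeight (r • L) μ.parts := by
  rw [sum_prod_coeff_eq_coeff_pow, ← partitionSeries_nsmul_eq_pow hE hE0, partitionSeries,
    PowerSeries.coeff_mk]

theorem sum_sq_smul_prod_coeff (E : R⟦X⟧) (r n : ℕ) :
    ∑ v ∈ Finset.Nat.antidiagonalTuple r n, (∑ i, (v i : ℚ) ^ 2) • ∏ i, E.coeff (v i) =
      (r • (eulerOperator R (eulerOperator R E) * E ^ (r - 1))).coeff n := by
  have hmk : PowerSeries.mk (fun k => (k : R) ^ 2 * E.coeff k) =
      eulerOperator R (eulerOperator R E) := by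
    ext k
    rw [PowerSeries.coeff_mk, coeff_eulerOperator, coeff_eulerOperator, sq, mul_assoc]
  rw [← hmk, ← sum_stat_mul_prod_coeff]
  simp [Algebra.smul_def]

theorem smul_sum_sq_smul_prod_coeff (hE : eulerOperator R E = L * E)
    (hE0 : E.constantCoeff = 1) (r n : ℕ) :
    (r : ℚ) • ∑ v ∈ Finset.Nat.antidiagonalTuple r n,
        (∑ i, (v i : ℚ) ^ 2) • ∏ i, E.coeff (v i) =
      (n : ℚ) ^ 2 • ∑ μ : n.Partition, partitionWeight (r • L) μ.parts +
        ((r : ℚ) - 1) • ∑ μ : n.Partition,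
          (μ.parts.map fun k : ℕ => (k : ℚ) ^ 2).sum • partitionWeight (r • L) μ.parts := by
  have hcoeff := congrArg (PowerSeries.coeff n) (nsmul_pow_mul_eulerOperator_sq hE r)
  rw [sum_sq_smul_prod_coeff, sum_sq_smul_partitionWeight, partitionSeries_nsmul_eq_pow hE hE0,
    ← sum_prod_coeff_eq_sum_partitionWeight hE hE0, sum_prod_coeff_eq_coeff_pow]
  simp only [map_add, map_sub, map_nsmul, coeff_eulerOperator] at hcoeff
  simp only [sub_smul, one_smul, Nat.cast_smul_eq_nsmul, map_nsmul, hcoeff]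
  simp [Algebra.smul_def, sq, mul_assoc]

theorem sum_affine_sq_smul_prod_coeff (hE : eulerOperator R E = L * E)
    (hE0 : E.constantCoeff = 1) {r : ℕ} (hr : r ≠ 0) (n : ℕ) (a b : ℚ) :
    ∑ v ∈ Finset.Nat.antidiagonalTuple r n,
        (a * ∑ i, (v i : ℚ) ^ 2 + b) • ∏ i, E.coeff (v i) =
      ∑ μ : n.Partition,
        (a * (((n : ℚ) ^ 2 + (r - 1) * (μ.parts.map fun k : ℕ => (k : ℚ) ^ 2).sum) / r) + b) •
          partitionWeight (r • L) μ.parts := by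
  have hr' : (r : ℚ) ≠ 0 := Nat.cast_ne_zero.2 hr
  have hsq := (eq_inv_smul_iff₀ hr').2 (smul_sum_sq_smul_prod_coeff hE hE0 r n)
  simp only [add_smul, mul_smul, sum_add_distrib, ← smul_sum, hsq,
    sum_prod_coeff_eq_sum_partitionWeight hE hE0, div_eq_inv_mul]

end LogarithmicDerivative

section SymmetricPolynomials

variable (σ R : Type*) [Fintype σ] [CommRing R]

/-- The generating series `∑ eₙ tⁿ` of the elementary symmetric polynomials. -/
noncomputable def esymmSeries : (MvPolynomial σ R)⟦X⟧ := PowerSeries.mk (esymm σ R)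

/-- The generating series `∑_{k ≥ 1} (-1)^(k+1) p_k t^k` of the signed power sums. -/
noncomputable def psumSeries : (MvPolynomial σ R)⟦X⟧ :=
  PowerSeries.mk fun k => if k = 0 then 0 else (-1) ^ (k + 1) * psum σ R k

theorem constantCoeff_esymmSeries : (esymmSeries σ R).constantCoeff = 1 := by
  simp [esymmSeries, ← PowerSeries.coeff_zero_eq_constantCoeff_apply]

/-- Newton's identities. -/
theorem eulerOperator_esymmSeries :
    eulerOperator _ (esymmSeries σ R) = psumSeries σ R * esymmSeries σ R := by
  ext1 n
  rw [coeff_eulerOperator, mul_comm (psumSeries σ R), PowerSeries.coeff_mul]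
  simp only [esymmSeries, psumSeries, PowerSeries.coeff_mk]
  rw [mul_esymm_eq_sum, mul_sum, sum_filter]
  refine sum_congr rfl fun x hx => ?_
  rw [HasAntidiagonal.mem_antidiagonal] at hx
  rcases eq_or_ne x.2 0 with hx2 | hx2
  · rw [if_pos hx2, if_neg (by omega), mul_zero]
  · have hsign : ((-1 : MvPolynomial σ R)) ^ x.1 * (-1) ^ x.1 = 1 := by
      rw [← mul_pow, neg_one_mul, neg_neg, one_pow]
    rw [if_neg hx2, if_pos (by omega), ← hx]
    linear_combination (-1) ^ (x.2 + 1) * esymm σ R x.1 * psum σ R x.2 * hsign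

variable {σ R}

theorem prod_map_pow_eq_pow_sum {M : Type*} [CommMonoid M] (a : M) (s : Multiset ℕ) :
    (s.map fun k => a ^ k).prod = a ^ s.sum := by
  induction s using Multiset.induction with
  | empty => simp
  | cons k s ih => simp [ih, pow_add]

theorem neg_one_pow_partition_add_card {A : Type*} [CommRing A] {n : ℕ} (μ : n.Partition) :
    (-1 : A) ^ (n + μ.parts.card) = (-1) ^ (n - μ.parts.card) := by
  have hcard : μ.parts.card ≤ n := by
    have h := Multiset.card_nsmul_le_sum (s := μ.parts) (a := 1) fun i hi => μ.parts_pos hi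
    simpa [μ.parts_sum] using h
  refine neg_one_pow_congr ?_
  grind

theorem prod_map_coeff_nsmul_psumSeries {n : ℕ} (r : ℕ) (μ : n.Partition) :
    (μ.parts.map fun k => (r • psumSeries σ R).coeff k).prod =
      (-1) ^ (n - μ.parts.card) * (r : MvPolynomial σ R) ^ μ.parts.card * psumPart σ R μ := by
  have hcoeff : ∀ k ∈ μ.parts, (r • psumSeries σ R).coeff k =
      (-1) ^ k * (-r) * psum σ R k := fun k hk => by
    rw [map_nsmul, psumSeries, PowerSeries.coeff_mk, if_neg (μ.parts_pos hk).ne', nsmul_eq_mul]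
    ring
  rw [Multiset.map_congr rfl hcoeff, Multiset.prod_map_mul, Multiset.prod_map_mul,
    prod_map_pow_eq_pow_sum, μ.parts_sum, Multiset.map_const', Multiset.prod_replicate, neg_pow,
    ← neg_one_pow_partition_add_card, psumPart]
  ring

theorem partitionWeight_nsmul_psumSeries [Algebra ℚ R] {n : ℕ} (r : ℕ) (μ : n.Partition) :
    partitionWeight (r • psumSeries σ R) μ.parts =
      ((-1 : ℚ) ^ (n - μ.parts.card) * r ^ μ.parts.card * (zConst μ.parts : ℚ)⁻¹) •
        psumPart σ R μ := by
  rw [partitionWeight, prod_map_coeff_nsmul_psumSeries, mul_comm _ (zConst μ.parts : ℚ)⁻¹,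
    mul_smul]
  congr 1
  simp [Algebra.smul_def]

end SymmetricPolynomials

theorem F2val_eq_affine (p1 p2 : ℚ) :
    F2val p1 p2 = (4 * p1 ^ 2 + 24 * p1 + 30) / 2880 * p2 + F2val p1 0 := by
  simp only [F2val]
  ring

theorem g2val_eq_F2val (p1 p2 : ℚ) : g2val p1 p2 = F2val p1 ((p1 ^ 2 + 2 * p2) / 3) := by
  simp only [F2val, g2val]
  ring

theorem F2_esymm_eq_g2_psum_general (n : ℕ) (σ R : Type*) [Fintype σ] [CommRing R]
    [Algebra ℚ R] :
    ∑ v ∈ Finset.Nat.antidiagonalTuple 3 n,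
        F2val ((v 0 : ℚ) + (v 1) + (v 2)) ((v 0 : ℚ) ^ 2 + (v 1) ^ 2 + (v 2) ^ 2) •
          (esymm σ R (v 0) * esymm σ R (v 1) * esymm σ R (v 2)) =
    ∑ μ : n.Partition,
      ((-1 : ℚ) ^ (n - μ.parts.card) *
        g2val (μ.parts.sum : ℚ) (((μ.parts.map (· ^ 2)).sum : ℕ) : ℚ) *
        3 ^ μ.parts.card *
        (((μ.parts.prod : ℕ) : ℚ) *
          ∏ i ∈ μ.parts.toFinset, ((μ.parts.count i).factorial : ℚ))⁻¹) •
        psumPart σ R μ := by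
  have haffine := sum_affine_sq_smul_prod_coeff (eulerOperator_esymmSeries σ R)
    (constantCoeff_esymmSeries σ R) three_ne_zero n ((4 * (n : ℚ) ^ 2 + 24 * n + 30) / 2880)
    (F2val n 0)
  simp only [← F2val_eq_affine] at haffine
  convert haffine using 2 with v hv μ
  · rw [← Finset.Nat.mem_antidiagonalTuple.1 hv]
    simp [Fin.sum_univ_three, Fin.prod_univ_three, esymmSeries]
  · have hsq : (((μ.parts.map (· ^ 2)).sum : ℕ) : ℚ) =
        (μ.parts.map fun k : ℕ => (k : ℚ) ^ 2).sum := by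
      simp [Nat.cast_multiset_sum]
    rw [partitionWeight_nsmul_psumSeries, smul_smul, μ.parts_sum, g2val_eq_F2val, zConst, hsq]
    congr 1
    push_cast
    ring_nf

/-- **The `k = 2` case of the abstract C-to-Q identity:** for `n ≥ 1`, in any finite number
of variables over `ℚ`, `∑_{ν∈ℕ³, |ν|=n} F₂(ν) e_{ν₁} e_{ν₂} e_{ν₃}
  = ∑_{μ ⊢ n} (−1)^{n−ℓ(μ)} g₂(μ) 3^{ℓ(μ)} z_μ⁻¹ p_μ`. -/
theorem F2_esymm_eq_g2_psum (n : ℕ) (hn : 1 ≤ n)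
    (σ : Type*) [Fintype σ] [DecidableEq σ] :
    ∑ v ∈ Finset.Nat.antidiagonalTuple 3 n,
        F2val ((v 0 : ℚ) + (v 1) + (v 2)) ((v 0 : ℚ) ^ 2 + (v 1) ^ 2 + (v 2) ^ 2) •
          (esymm σ ℚ (v 0) * esymm σ ℚ (v 1) * esymm σ ℚ (v 2)) =
    ∑ μ : n.Partition,
      ((-1 : ℚ) ^ (n - μ.parts.card) *
        g2val (μ.parts.sum : ℚ) (((μ.parts.map (· ^ 2)).sum : ℕ) : ℚ) *
        3 ^ μ.parts.card *
        (((μ.parts.prod : ℕ) : ℚ) *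
          ∏ i ∈ μ.parts.toFinset, ((μ.parts.count i).factorial : ℚ))⁻¹) •
        psumPart σ ℚ μ :=
  F2_esymm_eq_g2_psum_general n σ ℚ
end

section
/- Let R be a commutative ℚ-algebra, let r ≥ 3 be an integer, and set a(r) = −(1/2880)(r−1)(r−3)(r²−4r−6) and b(r) = (1/480)(2r²−3). Let q_1, q_2, q_3, … be any sequence of elements of R, define C_0 = 1 and C_m = Σ_{μ ⊢ m} Π_{i≥1} q_i^{m_i(μ)}/m_i(μ)! for m ≥ 1, and define g_2(μ) = (1/8640)(8·p_2(μ)·p_1(μ)² + p_1(μ)⁴ + 48·p_2(μ)·p_1(μ) + 12·p_1(μ)³ + 60·p_2(μ) + 45·p_1(μ)² + 54·p_1(μ)). Then Σ_{(i,j,k)∈ℕ³, i+j+k=r−3} (a(r) + b(r)·i²) · C_i·C_j·C_k = Σ_{μ ⊢ r−3} 3^{ℓ(μ)} · g_2(μ) · Π_{i≥1} q_i^{m_i(μ)}/m_i(μ)!. -/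
/-!
Write `Q_μ = ∏ᵢ qᵢ ^ mᵢ(μ) / mᵢ(μ)!`, `F = ∑_μ Q_μ X ^ |μ| = ∑ C_m X ^ m`, `q(X) = ∑ qᵢ Xⁱ` and
`D = X d/dX`. Removing one part from each partition shows that an additive statistic
`μ ↦ ∑_j w(μ_j)` with `w 0 = 0` has generating series `∑_μ (∑_j w(μ_j)) Q_μ X ^ |μ|` equal to
`(∑ w(i) qᵢ Xⁱ) F`.

For `w(i) = i` this reads `D F = (D q) F`. Solutions of such an equation are determined by their
constant term, so replacing `q` by `k q`, which multiplies `Q_μ` by `k ^ ℓ(μ)`, replaces `F` by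
`F ^ k`. For `w(i) = i ^ 2` it identifies the series weighted by `p₂(μ)`, and differentiating twice,
`k² (D² F) F ^ (k - 1) = D² (F ^ k) + (k - 1) · k (D² q) F ^ k`.
Thus the weight `i²` on one index of a `k`-fold convolution of the `C_m` in degree `n` becomes the
weight `(n² + (k - 1) p₂(μ)) / k²` on partitions of `n`. For `k = 3` the theorem is then the
polynomial identity `a(n + 3) + b(n + 3) (n² + 2 p₂) / 9 = g₂` with `p₁ = n`.
-/

open Finset

/-- The Goulden–Rattan coefficient `a(r) = −(1/2880)(r−1)(r−3)(r²−4r−6)`. -/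
def aGR (r : ℕ) : ℚ :=
  -(1 / 2880) * ((r : ℚ) - 1) * ((r : ℚ) - 3) * ((r : ℚ) ^ 2 - 4 * (r : ℚ) - 6)

/-- The Goulden–Rattan coefficient `b(r) = (1/480)(2r²−3)`. -/
def bGR (r : ℕ) : ℚ := (1 / 480) * (2 * (r : ℚ) ^ 2 - 3)

open PowerSeries

section EulerOperator

variable {R : Type*} [CommSemiring R]

/-- The Euler operator `X d/dX`, which multiplies the `n`-th coefficient by `n`. -/
noncomputable def eulerOp : Derivation R R⟦X⟧ R⟦X⟧ :=
  (X : R⟦X⟧) • d⁄dX R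

@[simp]
lemma coeff_eulerOp (f : R⟦X⟧) (n : ℕ) : coeff n (eulerOp f) = n * coeff n f := by
  change coeff n (X * d⁄dX R f) = n * coeff n f
  cases n with
  | zero => simp
  | succ n => rw [coeff_succ_X_mul, coeff_derivative, mul_comm, Nat.cast_succ]

lemma eq_of_eulerOp_eq_mul [IsAddTorsionFree R] {L f g : R⟦X⟧} (hL : coeff 0 L = 0)
    (hf : eulerOp f = L * f) (hg : eulerOp g = L * g) (h₀ : coeff 0 f = coeff 0 g) : f = g := by
  ext n
  induction n using Nat.strong_induction_on with
  | _ n ih =>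
    rcases eq_or_ne n 0 with rfl | hn
    · exact h₀
    have recurrence : coeff n (L * f) = coeff n (L * g) := by
      rw [coeff_mul, coeff_mul]
      refine sum_congr rfl fun ⟨i, j⟩ hij ↦ ?_
      rw [HasAntidiagonal.mem_antidiagonal] at hij
      rcases eq_or_ne i 0 with rfl | hi
      · simp only [hL, zero_mul]
      · rw [ih j (by grind)]
    rw [← hf, ← hg, coeff_eulerOp, coeff_eulerOp, ← nsmul_eq_mul, ← nsmul_eq_mul] at recurrence
    exact nsmul_right_injective hn recurrence

lemma eulerOp_mk_natCast_smul (q : ℕ → R) (k : ℕ) :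
    eulerOp (PowerSeries.mk ((k : R) • q)) = (k : R⟦X⟧) * eulerOp (PowerSeries.mk q) := by
  rw [← nsmul_eq_mul, ← Nat.cast_smul_eq_nsmul R, ← Derivation.map_smul]
  rfl

end EulerOperator

section LogDerivative

variable {R A : Type*} [CommSemiring R] [CommRing A] [Algebra R A] {D : Derivation R A A} {L f : A}

lemma derivation_pow_of_eq_mul (hf : D f = L * f) (k : ℕ) : D (f ^ k) = k * L * f ^ k := by
  induction k with
  | zero => simp
  | succ k ih =>
    rw [pow_succ, D.leibniz, ih, hf, smul_eq_mul, smul_eq_mul]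
    push_cast
    ring

lemma sq_mul_derivation_derivation_mul_pow (hf : D f = L * f) (k : ℕ) :
    (k + 1) ^ 2 * (D (D f) * f ^ k) =
      D (D (f ^ (k + 1))) + k * ((k + 1) * D L * f ^ (k + 1)) := by
  have hpow := derivation_pow_of_eq_mul hf (k + 1)
  have hcast : D ((k + 1 : ℕ) : A) = 0 := D.map_natCast _
  rw [hpow, D.leibniz, D.leibniz, hcast, hpow, hf, D.leibniz, hf]
  simp only [smul_eq_mul]
  push_cast
  ring

end LogDerivative

lemma sum_antidiagonalTuple_prod_coeff {R : Type*} [CommSemiring R] {k : ℕ}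
    (f : Fin k → R⟦X⟧) (n : ℕ) :
    ∑ v ∈ Finset.Nat.antidiagonalTuple k n, ∏ i, coeff (v i) (f i) = coeff n (∏ i, f i) := by
  rw [coeff_prod]
  refine sum_equiv Finsupp.equivFunOnFinite.symm (fun v ↦ ?_) fun v _ ↦ rfl
  simp [Finset.Nat.mem_antidiagonalTuple]

lemma sum_map_parts_eq_sum_range {R : Type*} [CommSemiring R] {n : ℕ} (μ : n.Partition)
    (w : ℕ → R) :
    (μ.parts.map w).sum = ∑ i ∈ range (n + 1), w i * μ.parts.count i := by
  rw [sum_multiset_map_count]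
  simp only [nsmul_eq_mul, mul_comm (w _)]
  refine sum_subset (fun i hi ↦ ?_) fun i _ hi ↦ ?_
  · rw [Multiset.mem_toFinset] at hi
    exact mem_range_succ_iff.2 (μ.le_of_mem_parts hi)
  · rw [Multiset.mem_toFinset, ← Multiset.count_eq_zero] at hi
    rw [hi, Nat.cast_zero, zero_mul]

section PartitionExp

variable {R : Type*} [CommRing R] [Algebra ℚ R] (q : ℕ → R)

/-- The divided-power monomial `Q_s = ∏ᵢ qᵢ ^ mᵢ(s) / mᵢ(s)!` of a multiset `s`. -/
def dividedPowerMonomial (s : Multiset ℕ) : R :=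
  ∏ i ∈ s.toFinset, ((s.count i).factorial : ℚ)⁻¹ • q i ^ s.count i

/-- The generating series `∑_μ Q_μ X ^ |μ|` of the divided-power monomials of partitions, which is
`exp (∑_{i ≥ 1} qᵢ Xⁱ)`. The value `q 0` is irrelevant. -/
noncomputable def partitionExp : R⟦X⟧ :=
  Nat.Partition.genFun fun i m ↦ (m.factorial : ℚ)⁻¹ • q i ^ m

lemma coeff_partitionExp (n : ℕ) :
    coeff n (partitionExp q) = ∑ μ : n.Partition, dividedPowerMonomial q μ.parts :=
  Nat.Partition.coeff_genFun _ _

lemma coeff_zero_partitionExp : coeff 0 (partitionExp q) = 1 := by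
  simp [coeff_partitionExp, dividedPowerMonomial]

lemma dividedPowerMonomial_smul (c : R) (s : Multiset ℕ) :
    dividedPowerMonomial (c • q) s = c ^ s.card * dividedPowerMonomial q s := by
  simp only [dividedPowerMonomial, Pi.smul_apply, smul_eq_mul, mul_pow, ← mul_smul_comm,
    prod_mul_distrib, prod_pow_eq_pow_sum, Multiset.toFinset_sum_count_eq]

lemma dividedPowerMonomial_eq_prod_of_subset {s : Multiset ℕ} {T : Finset ℕ}
    (h : s.toFinset ⊆ T) :
    dividedPowerMonomial q s = ∏ i ∈ T, ((s.count i).factorial : ℚ)⁻¹ • q i ^ s.count i := by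
  refine prod_subset h fun i _ hi ↦ ?_
  rw [Multiset.mem_toFinset, ← Multiset.count_eq_zero] at hi
  simp [hi]

lemma count_mul_dividedPowerMonomial {s : Multiset ℕ} {i : ℕ} (hi : i ∈ s) :
    s.count i * dividedPowerMonomial q s = q i * dividedPowerMonomial q (s.erase i) := by
  have hi' : i ∈ s.toFinset := Multiset.mem_toFinset.2 hi
  rw [dividedPowerMonomial, dividedPowerMonomial_eq_prod_of_subset q
      (Multiset.toFinset_subset.2 (Multiset.erase_subset i s)),
    ← mul_prod_erase _ _ hi', ← mul_prod_erase _ _ hi', ← mul_assoc, ← mul_assoc]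
  congr 1
  · obtain ⟨m, hm⟩ := Nat.exists_eq_succ_of_ne_zero (Multiset.count_ne_zero.2 hi)
    rw [Multiset.count_erase_self, hm, Nat.succ_sub_one, Nat.factorial_succ, pow_succ',
      ← nsmul_eq_mul, ← Nat.cast_smul_eq_nsmul ℚ, smul_smul, mul_smul_comm, Nat.cast_mul, mul_inv,
      mul_inv_cancel_left₀ (Nat.cast_ne_zero.2 m.succ_ne_zero)]
  · refine prod_congr rfl fun j hj ↦ ?_
    rw [Multiset.count_erase_of_ne (ne_of_mem_erase hj)]

lemma sum_count_mul_dividedPowerMonomial {n i : ℕ} (hi : 1 ≤ i) (hin : i ≤ n) :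
    ∑ μ : n.Partition, μ.parts.count i * dividedPowerMonomial q μ.parts =
      q i * coeff (n - i) (partitionExp q) := by
  calc ∑ μ : n.Partition, μ.parts.count i * dividedPowerMonomial q μ.parts
    _ = ∑ μ : n.Partition with i ∈ μ.parts, μ.parts.count i * dividedPowerMonomial q μ.parts := by
      refine (sum_filter_of_ne fun μ _ hμ ↦ ?_).symm
      contrapose! hμ
      rw [Multiset.count_eq_zero.2 hμ, Nat.cast_zero, zero_mul]
    _ = ∑ μ : {μ : n.Partition // i ∈ μ.parts},
        q i * dividedPowerMonomial q (μ.1.parts.erase i) := by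
      rw [← sum_subtype_eq_sum_filter, subtype_univ]
      exact sum_congr rfl fun μ _ ↦ count_mul_dividedPowerMonomial q μ.2
    _ = ∑ ν : (n - i).Partition, q i * dividedPowerMonomial q ν.parts :=
      Fintype.sum_equiv (Nat.Partition.partitionWithPartEquiv hi hin) _ _ fun μ ↦ by
        rw [Nat.Partition.partitionWithPartEquiv_apply_parts]
    _ = q i * coeff (n - i) (partitionExp q) := by rw [coeff_partitionExp, mul_sum]

lemma coeff_mk_mul_partitionExp {w : ℕ → R} (hw : w 0 = 0) (n : ℕ) :
    coeff n ((PowerSeries.mk fun i ↦ w i * q i) * partitionExp q) =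
      ∑ μ : n.Partition, (μ.parts.map w).sum * dividedPowerMonomial q μ.parts := by
  simp only [sum_map_parts_eq_sum_range, sum_mul, mul_assoc]
  rw [sum_comm, coeff_mul, Nat.sum_antidiagonal_eq_sum_range_succ
    fun i j ↦ coeff i (PowerSeries.mk fun i ↦ w i * q i) * coeff j (partitionExp q)]
  refine sum_congr rfl fun i hi ↦ ?_
  rw [← mul_sum, coeff_mk, mul_assoc]
  rcases Nat.eq_zero_or_pos i with rfl | hi₀
  · simp only [hw, zero_mul]
  · rw [sum_count_mul_dividedPowerMonomial q hi₀ (mem_range_succ_iff.1 hi)]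

lemma eulerOp_partitionExp :
    eulerOp (partitionExp q) = eulerOp (PowerSeries.mk q) * partitionExp q := by
  have hmk : eulerOp (PowerSeries.mk q) = PowerSeries.mk fun i ↦ (i : R) * q i := by
    ext n
    rw [coeff_eulerOp, coeff_mk, coeff_mk]
  ext n
  rw [hmk, coeff_mk_mul_partitionExp q Nat.cast_zero, coeff_eulerOp, coeff_partitionExp, mul_sum]
  refine sum_congr rfl fun μ _ ↦ ?_
  rw [← Nat.cast_multiset_sum, μ.parts_sum]

lemma coeff_eulerOp_eulerOp_mk_mul_partitionExp (n : ℕ) :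
    coeff n (eulerOp (eulerOp (PowerSeries.mk q)) * partitionExp q) =
      ∑ μ : n.Partition, ((μ.parts.map (· ^ 2)).sum : ℕ) * dividedPowerMonomial q μ.parts := by
  have hmk : eulerOp (eulerOp (PowerSeries.mk q)) =
      PowerSeries.mk fun i ↦ ((i ^ 2 : ℕ) : R) * q i := by
    ext n
    rw [coeff_eulerOp, coeff_eulerOp, coeff_mk, coeff_mk, Nat.cast_pow, sq, mul_assoc]
  rw [hmk, coeff_mk_mul_partitionExp q (w := fun i ↦ ((i ^ 2 : ℕ) : R)) (by simp)]
  simp only [Nat.cast_multiset_sum, Multiset.map_map, Function.comp_def]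

lemma partitionExp_natCast_smul (k : ℕ) : partitionExp ((k : R) • q) = partitionExp q ^ k := by
  have : IsAddTorsionFree R := .of_module_rat R
  refine eq_of_eulerOp_eq_mul (L := (k : R⟦X⟧) * eulerOp (PowerSeries.mk q)) ?_ ?_
    (derivation_pow_of_eq_mul (eulerOp_partitionExp q) k) ?_
  · simp only [← eulerOp_mk_natCast_smul, coeff_eulerOp, Nat.cast_zero, zero_mul]
  · rw [eulerOp_partitionExp, eulerOp_mk_natCast_smul]
  · have hpow : coeff 0 (partitionExp q ^ k) = coeff 0 (partitionExp q) ^ k := by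
      simp only [coeff_zero_eq_constantCoeff_apply, map_pow]
    rw [hpow, coeff_zero_partitionExp, coeff_zero_partitionExp, one_pow]

lemma coeff_partitionExp_pow (k n : ℕ) :
    coeff n (partitionExp q ^ k) =
      ∑ μ : n.Partition, (k : R) ^ μ.parts.card * dividedPowerMonomial q μ.parts := by
  simp only [← partitionExp_natCast_smul, coeff_partitionExp, dividedPowerMonomial_smul]

lemma coeff_eulerOp_eulerOp_mk_mul_partitionExp_pow (k n : ℕ) :
    coeff n ((k : R⟦X⟧) * eulerOp (eulerOp (PowerSeries.mk q)) * partitionExp q ^ k) =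
      ∑ μ : n.Partition, ((μ.parts.map (· ^ 2)).sum : ℕ) *
        ((k : R) ^ μ.parts.card * dividedPowerMonomial q μ.parts) := by
  have hmk : (k : R⟦X⟧) * eulerOp (eulerOp (PowerSeries.mk q)) =
      eulerOp (eulerOp (PowerSeries.mk ((k : R) • q))) := by
    rw [eulerOp_mk_natCast_smul, ← nsmul_eq_mul, ← nsmul_eq_mul, map_nsmul]
  rw [hmk, ← partitionExp_natCast_smul, coeff_eulerOp_eulerOp_mk_mul_partitionExp]
  simp only [dividedPowerMonomial_smul]

lemma sum_prod_coeff_partitionExp (k n : ℕ) :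
    ∑ v ∈ Finset.Nat.antidiagonalTuple k n, ∏ i, coeff (v i) (partitionExp q) =
      ∑ μ : n.Partition, (k : R) ^ μ.parts.card * dividedPowerMonomial q μ.parts := by
  rw [sum_antidiagonalTuple_prod_coeff fun _ ↦ partitionExp q, prod_const, card_univ,
    Fintype.card_fin, coeff_partitionExp_pow]

lemma sum_sq_mul_prod_coeff_partitionExp (k n : ℕ) :
    ((k : R) + 1) ^ 2 * ∑ v ∈ Finset.Nat.antidiagonalTuple (k + 1) n,
        (v 0 : R) ^ 2 * ∏ i, coeff (v i) (partitionExp q) =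
      ∑ μ : n.Partition, ((n : R) ^ 2 + k * ((μ.parts.map (· ^ 2)).sum : ℕ)) *
        (((k + 1 : ℕ) : R) ^ μ.parts.card * dividedPowerMonomial q μ.parts) := by
  set F := partitionExp q with hF
  have hsum : ∑ v ∈ Finset.Nat.antidiagonalTuple (k + 1) n, (v 0 : R) ^ 2 * ∏ i, coeff (v i) F =
      coeff n (eulerOp (eulerOp F) * F ^ k) := by
    have := sum_antidiagonalTuple_prod_coeff (Fin.cons (eulerOp (eulerOp F)) fun _ : Fin k ↦ F) n
    simpa only [Fin.prod_univ_succ, Fin.cons_zero, Fin.cons_succ, coeff_eulerOp, prod_const,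
      card_univ, Fintype.card_fin, sq, mul_assoc] using this
  have hD := congrArg (coeff n) (sq_mul_derivation_derivation_mul_pow (eulerOp_partitionExp q) k)
  have hnat (m : ℕ) (f : R⟦X⟧) : coeff n ((m : R⟦X⟧) * f) = m * coeff n f := by
    rw [← nsmul_eq_mul, map_nsmul, nsmul_eq_mul]
  rw [map_add, ← Nat.cast_succ, ← Nat.cast_pow, hnat, hnat,
    coeff_eulerOp_eulerOp_mk_mul_partitionExp_pow, coeff_eulerOp, coeff_eulerOp,
    coeff_partitionExp_pow] at hD
  rw [hsum, hF, ← Nat.cast_succ, ← Nat.cast_pow, hD]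
  simp only [add_mul, sum_add_distrib, mul_sum, sq, mul_assoc]

lemma sum_add_mul_sq_smul_prod_coeff_partitionExp (a b : ℚ) (k n : ℕ) :
    ∑ v ∈ Finset.Nat.antidiagonalTuple (k + 1) n,
        (a + b * (v 0 : ℚ) ^ 2) • ∏ i, coeff (v i) (partitionExp q) =
      ∑ μ : n.Partition, (((k + 1 : ℕ) : ℚ) ^ μ.parts.card *
        (a + b * ((n ^ 2 + k * ((μ.parts.map (· ^ 2)).sum : ℕ)) / (k + 1) ^ 2))) •
          dividedPowerMonomial q μ.parts := by
  have hk : ((k : ℚ) + 1) ^ 2 ≠ 0 := by positivity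
  have hsq : ∑ v ∈ Finset.Nat.antidiagonalTuple (k + 1) n,
        (v 0 : ℚ) ^ 2 • ∏ i, coeff (v i) (partitionExp q) =
      (((k : ℚ) + 1) ^ 2)⁻¹ • ∑ μ : n.Partition,
        ((n : ℚ) ^ 2 + k * ((μ.parts.map (· ^ 2)).sum : ℕ)) •
          (((k + 1 : ℕ) : ℚ) ^ μ.parts.card • dividedPowerMonomial q μ.parts) := by
    rw [eq_inv_smul_iff₀ hk]
    simpa [Algebra.smul_def, -Nat.cast_multiset_sum] using sum_sq_mul_prod_coeff_partitionExp q k n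
  have hone : ∑ v ∈ Finset.Nat.antidiagonalTuple (k + 1) n,
        ∏ i, coeff (v i) (partitionExp q) =
      ∑ μ : n.Partition, ((k + 1 : ℕ) : ℚ) ^ μ.parts.card • dividedPowerMonomial q μ.parts := by
    simpa [Algebra.smul_def] using sum_prod_coeff_partitionExp q (k + 1) n
  simp only [add_smul, mul_smul, sum_add_distrib, ← smul_sum]
  rw [hsq, hone]
  simp only [smul_sum, ← sum_add_distrib, smul_smul, ← add_smul]
  refine sum_congr rfl fun μ _ ↦ ?_
  congr 1
  ring

end PartitionExp

lemma aGR_add_bGR (n : ℕ) (p₂ : ℚ) :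
    aGR (n + 3) + bGR (n + 3) * ((n ^ 2 + 2 * p₂) / 9) = g2val n p₂ := by
  simp only [aGR, bGR, g2val]
  push_cast
  ring

/-- **Theorem 2 (abstract form).** With `C₀ = 1` and
`C_m = ∑_{μ ⊢ m} ∏ᵢ qᵢ^{mᵢ(μ)}/mᵢ(μ)!` for `m ≥ 1`, for any integer `r ≥ 3`:
`∑_{i+j+k=r−3} (a(r) + b(r) i²) Cᵢ Cⱼ C_k
  = ∑_{μ ⊢ r−3} 3^{ℓ(μ)} g₂(μ) ∏ᵢ qᵢ^{mᵢ(μ)}/mᵢ(μ)!`. -/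
theorem goulden_rattan_g2_expansion (R : Type*) [CommRing R] [Algebra ℚ R]
    (r : ℕ) (hr : 3 ≤ r) (q : ℕ → R) (C : ℕ → R) (hC0 : C 0 = 1)
    (hC : ∀ m : ℕ, 1 ≤ m → C m = ∑ μ : m.Partition,
      ∏ i ∈ μ.parts.toFinset,
        (((μ.parts.count i).factorial : ℚ))⁻¹ • q i ^ (μ.parts.count i)) :
    ∑ v ∈ Finset.Nat.antidiagonalTuple 3 (r - 3),
        (aGR r + bGR r * (v 0 : ℚ) ^ 2) • (C (v 0) * C (v 1) * C (v 2)) =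
    ∑ μ : (r - 3).Partition,
      ((3 : ℚ) ^ μ.parts.card *
        g2val (μ.parts.sum : ℚ) (((μ.parts.map (· ^ 2)).sum : ℕ) : ℚ)) •
        ∏ i ∈ μ.parts.toFinset,
          (((μ.parts.count i).factorial : ℚ))⁻¹ • q i ^ (μ.parts.count i) := by
  obtain ⟨n, rfl⟩ := Nat.exists_eq_add_of_le' hr
  have hC_coeff (m : ℕ) : C m = coeff m (partitionExp q) := by
    rcases Nat.eq_zero_or_pos m with rfl | hm
    · rw [hC0, coeff_zero_partitionExp]
    · exact (hC m hm).trans (coeff_partitionExp q m).symm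
  have hC_prod (v : Fin 3 → ℕ) :
      C (v 0) * C (v 1) * C (v 2) = ∏ i, coeff (v i) (partitionExp q) := by
    simp only [hC_coeff, Fin.prod_univ_three]
  have hweight := sum_add_mul_sq_smul_prod_coeff_partitionExp q (aGR (n + 3)) (bGR (n + 3)) 2 n
  norm_num only at hweight
  simp only [Nat.add_sub_cancel, hC_prod]
  rw [hweight]
  refine sum_congr rfl fun μ _ ↦ ?_
  rw [μ.parts_sum, ← aGR_add_bGR]
  rfl
end
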